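/- (Fermionic realization of the short node of type B_n via a ghost field.) Let 𝒞 be the complex vector space with basis {a, a*, e} and symmetric bilinear form ⟨·,·⟩ determined by ⟨a, a*⟩ = ⟨a*, a⟩ = 1, ⟨e, e⟩ = −1, and all other pairings of basis vectors equal to 0 (a plays the role of ε_n, a* of ε_n*, and e is the ghost field). On the fermionic Fock space V of 𝒞, define for p ∈ ℤ the operators X₊(p) = √2 · T_{a, e}(p), X₋(p) = √2 · T_{e, a*}(p), and h(p) = T_{a, a*}(p). Then for all k, m ∈ ℤ: (i) [X₊(k), X₋(m)] = −2( h(k+m) + k δ_{k+m,0} · id_V ); (ii) [h(k), X₊(m)] = X₊(k+m) and [h(k), X₋(m)] = −X₋(k+m); (iii) [h(k), h(m)] = k δ_{k+m,0} · id_V. Thus X₊, X₋, h realize the MRY relations (R1)–(R3) for the short simple root α_n of the toroidal Lie algebra of type B_n (with (α_n|α_n) = 1) with the central element ¢ acting as the identity, i.e. at level one. -/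

import Mathlib

noncomputable section

variable (C : Type*) [AddCommGroup C] [Module ℂ C]

/-- `W = ⊕_{k ∈ ℤ_{≥0}+1/2} 𝒞^{(k)}`: the direct sum of copies of `𝒞`, the
copy indexed by `k : ℕ` standing for the half-integer `k + 1/2`; the element
of the `k`-th copy corresponding to `u : 𝒞` is the generator `u(-(k+1/2))`. -/
abbrev FockW := ℕ →₀ C

/-- The fermionic Fock space `V = Λ(W)`, the exterior algebra of `W`. -/
abbrev FockV := ExteriorAlgebra ℂ (FockW C)

/-- The creation operator `u(-(k+1/2))`: left exterior multiplication by the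
generator `u(-(k+1/2))`. -/
def create (u : C) (k : ℕ) : FockV C →ₗ[ℂ] FockV C :=
  LinearMap.mulLeft ℂ (ExteriorAlgebra.ι ℂ (Finsupp.single k u))

variable (B : C →ₗ[ℂ] C →ₗ[ℂ] ℂ)

/-- The annihilation operator `u(k+1/2)`: the unique odd derivation of `Λ(W)`
(the left contraction/interior product against the dual vector
`w ↦ ⟨u, w_k⟩`) sending the generator `v(-(l+1/2))` to `⟨u,v⟩ δ_{k,l} · 1`. -/
def annih (u : C) (k : ℕ) : FockV C →ₗ[ℂ] FockV C :=
  CliffordAlgebra.contractLeft ((B u).comp (Finsupp.lapply k))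

/-- The mode `u(m/2)` for an odd integer `m` (so that the half-integers
`m/2 ∈ ℤ + 1/2` are parametrized by odd `m : ℤ`): a creation operator if
`m/2 < 0`, an annihilation operator if `m/2 > 0`. -/
def fop (u : C) (m : ℤ) : FockV C →ₗ[ℂ] FockV C :=
  if m < 0 then create C u ((-m - 1) / 2).toNat else annih C B u ((m - 1) / 2).toNat

/-- The normal ordered product `:u(m/2) v(n/2):` for odd integers `m`, `n`:
it is `u(m/2)v(n/2)` if `m/2 < 0` and `−v(n/2)u(m/2)` if `m/2 > 0`. -/
def nord (u : C) (m : ℤ) (v : C) (n : ℤ) : FockV C →ₗ[ℂ] FockV C :=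
  if m < 0 then (fop C B u m).comp (fop C B v n)
  else -((fop C B v n).comp (fop C B u m))

/-- The normal-ordered quadratic operator
`T_{r₁,r₂}(p) = Σ_{k ∈ ℤ+1/2} :r₁(k) r₂(p−k):` applied to `x ∈ V`, the sum
running over the half-integers `k = j/2` with `j : ℤ` odd (on each vector of
`V` all but finitely many summands act as zero). -/
def Tq (r₁ r₂ : C) (p : ℤ) (x : FockV C) : FockV C :=
  ∑ᶠ (j : ℤ) (_ : Odd j), nord C B r₁ j r₂ (2 * p - j) x

end

noncomputable section

/-- `𝒞`: the complex vector space with basis `{a, a*, e}` (coordinates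
`0 ↦ a`, `1 ↦ a*`, `2 ↦ e`). -/
abbrev CC : Type := Fin 3 → ℂ

/-- `a` (playing the role of `ε_n`) -/
def va : CC := ![1, 0, 0]
/-- `a*` (playing the role of `ε_n*`) -/
def vastar : CC := ![0, 1, 0]
/-- the ghost field `e`, with `⟨e,e⟩ = −1` -/
def ve : CC := ![0, 0, 1]

/-- The symmetric bilinear form on `𝒞` with `⟨a,a*⟩ = ⟨a*,a⟩ = 1`,
`⟨e,e⟩ = −1`, and all other pairings of basis vectors zero. -/
def BC : CC →ₗ[ℂ] CC →ₗ[ℂ] ℂ :=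
  LinearMap.mk₂ ℂ (fun v w => v 0 * w 1 + v 1 * w 0 - v 2 * w 2)
    (fun v v' w => by simp only [Pi.add_apply]; ring)
    (fun c v w => by simp only [Pi.smul_apply, smul_eq_mul]; ring)
    (fun v w w' => by simp only [Pi.add_apply]; ring)
    (fun c v w => by simp only [Pi.smul_apply, smul_eq_mul]; ring)

/-- `X₊(p) = √2 · T_{a,e}(p)` -/
def Xplus (p : ℤ) (x : FockV CC) : FockV CC :=
  (Real.sqrt 2 : ℂ) • Tq CC BC va ve p x

/-- `X₋(p) = √2 · T_{e,a*}(p)` -/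
def Xminus (p : ℤ) (x : FockV CC) : FockV CC :=
  (Real.sqrt 2 : ℂ) • Tq CC BC ve vastar p x

/-- `h(p) = T_{a,a*}(p)` -/
def hOp (p : ℤ) (x : FockV CC) : FockV CC := Tq CC BC va vastar p x

end

noncomputable section
namespace GhostAux

variable {C : Type*} [AddCommGroup C] [Module ℂ C] (B : C →ₗ[ℂ] C →ₗ[ℂ] ℂ)

/-- mode `u(i + 1/2)` -/
def F (u : C) (i : ℤ) : FockV C →ₗ[ℂ] FockV C := fop C B u (2 * i + 1)

lemma F_neg (u : C) (i : ℤ) (h : i < 0) : F B u i = create C u (-i - 1).toNat := by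
  unfold F fop
  rw [if_pos (by omega)]
  congr 2
  omega

lemma F_nonneg (u : C) (i : ℤ) (h : 0 ≤ i) : F B u i = annih C B u i.toNat := by
  unfold F fop
  rw [if_neg (by omega)]
  congr 2
  omega

lemma annih_create (u v : C) (k l : ℕ) (x : FockV C) :
    annih C B u k (create C v l x) = (if l = k then B u v else 0) • x
      - create C v l (annih C B u k x) := by
  unfold annih create
  simp only [LinearMap.mulLeft_apply, ExteriorAlgebra.ι]
  rw [CliffordAlgebra.contractLeft_ι_mul]
  congr 2
  simp only [LinearMap.comp_apply, Finsupp.lapply_apply, Finsupp.single_apply]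
  split_ifs <;> simp

lemma create_create (u v : C) (k l : ℕ) (x : FockV C) :
    create C u k (create C v l x) = - create C v l (create C u k x) := by
  unfold create
  simp only [LinearMap.mulLeft_apply, ← mul_assoc, ← neg_mul]
  congr 1
  rw [neg_mul]
  exact eq_neg_of_add_eq_zero_left 
    (ExteriorAlgebra.ι_add_mul_swap (R := ℂ) (Finsupp.single k u) (Finsupp.single l v))

lemma annih_annih (u v : C) (k l : ℕ) (x : FockV C) :
    annih C B u k (annih C B v l x) = - annih C B v l (annih C B u k x) := by
  unfold annih
  exact CliffordAlgebra.contractLeft_comm _ _ _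

lemma F_anti (hB : ∀ u v, B u v = B v u) (u v : C) (i j : ℤ) (x : FockV C) :
    F B u i (F B v j x) = (if i + j = -1 then B u v else 0) • x - F B v j (F B u i x) := by
  rcases lt_or_ge i 0 with hi | hi <;> rcases lt_or_ge j 0 with hj | hj
  · rw [F_neg B u i hi, F_neg B v j hj, create_create, if_neg (by omega)]; simp
  · rw [F_neg B u i hi, F_nonneg B v j hj, annih_create, hB v u]
    have : ((-i - 1).toNat = j.toNat) ↔ i + j = -1 := by omega
    simp only [this]; abel
  · rw [F_nonneg B u i hi, F_neg B v j hj, annih_create]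
    have : ((-j - 1).toNat = i.toNat) ↔ i + j = -1 := by omega
    simp only [this]
  · rw [F_nonneg B u i hi, F_nonneg B v j hj, annih_annih, if_neg (by omega)]; simp

lemma annih_finite (u : C) (x : FockV C) : ∃ N : ℕ, ∀ n, N ≤ n → annih C B u n x = 0 := by
  induction x using CliffordAlgebra.left_induction with
  | algebraMap r => exact ⟨0, fun n _ => by simp [annih, CliffordAlgebra.contractLeft_algebraMap]⟩
  | add x y hx hy =>
    obtain ⟨N, hN⟩ := hx
    obtain ⟨M, hM⟩ := hy
    exact ⟨max N M, fun n hn => by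
      rw [map_add, hN n (le_trans (le_max_left _ _) hn), hM n (le_trans (le_max_right _ _) hn),
        add_zero]⟩
  | ι_mul x w hx =>
    obtain ⟨N, hN⟩ := hx
    refine ⟨max N (w.support.sup id + 1), fun n hn => ?_⟩
    have h1 := hN n (le_trans (le_max_left _ _) hn)
    have h2 : w n = 0 := by
      by_contra h
      have := Finset.le_sup (f := id) (Finsupp.mem_support_iff.mpr h)
      have := le_trans (le_max_right _ _) hn
      simp only [id] at *
      omega
    unfold annih at h1 ⊢
    rw [CliffordAlgebra.contractLeft_ι_mul, h1]
    simp [h2]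

/-- normal ordered product -/
def N (u : C) (i : ℤ) (v : C) (j : ℤ) : FockV C →ₗ[ℂ] FockV C :=
  if i < 0 then (F B u i).comp (F B v j) else -((F B v j).comp (F B u i))

lemma N_finite (u v : C) (p : ℤ) (x : FockV C) :
    (Function.support fun i : ℤ => N B u i v (p - i) x).Finite := by
  obtain ⟨K, hK⟩ := annih_finite B u x
  obtain ⟨L, hL⟩ := annih_finite B v x
  refine (Set.finite_Icc (p - L - (|p|)) (K + |p|)).subset fun i hi => ?_
  rw [Function.mem_support] at hi
  by_contra h
  apply hi
  have h1 := le_abs_self p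
  have h2 := neg_abs_le p
  rw [Set.mem_Icc, not_and_or] at h
  unfold N
  split_ifs with hneg
  · have : L ≤ (p - i).toNat := by omega
    rw [LinearMap.comp_apply, F_nonneg B v (p - i) (by omega), hL _ this, map_zero]
  · have : K ≤ i.toNat := by omega
    rw [LinearMap.neg_apply, LinearMap.comp_apply, F_nonneg B u i (by omega), hK _ this, map_zero,
      neg_zero]

/-- the quadratic operator as a linear map -/
def T (u v : C) (p : ℤ) : FockV C →ₗ[ℂ] FockV C where
  toFun x := ∑ᶠ i : ℤ, N B u i v (p - 1 - i) x
  map_add' x y := by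
    rw [← finsum_add_distrib (N_finite B u v _ x) (N_finite B u v _ y)]
    simp only [map_add]
  map_smul' c x := by
    simp only [map_smul, RingHom.id_apply]
    rw [smul_finsum]

lemma T_apply (u v : C) (p : ℤ) (x : FockV C) :
    T B u v p x = ∑ᶠ i : ℤ, N B u i v (p - 1 - i) x := rfl

lemma Tq_eq (u v : C) (p : ℤ) (x : FockV C) : Tq C B u v p x = T B u v p x := by
  rw [T_apply]
  unfold Tq
  have hinj : Function.Injective (fun i : ℤ => 2 * i + 1) := fun a b h => by
    simp only at h; omega
  have h1 := finsum_mem_range (f := fun j : ℤ => nord C B u j v (2 * p - j) x) hinj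
  have h2 : Set.range (fun i : ℤ => 2 * i + 1) = {j | Odd j} := by
    ext j; simp only [Set.mem_range, Set.mem_ofPred_eq, Odd, eq_comm]
  rw [h2] at h1
  refine Eq.trans h1 (finsum_congr fun i => ?_)
  unfold nord N F
  have h3 : 2 * p - (2 * i + 1) = 2 * (p - 1 - i) + 1 := by ring
  have h4 : 2 * i + 1 < 0 ↔ i < 0 := by omega
  simp only [h3, h4]

lemma T_field (hB : ∀ u v, B u v = B v u) (r₁ r₂ s : C) (k n : ℤ) (x : FockV C) :
    T B r₁ r₂ k (F B s n x) = F B s n (T B r₁ r₂ k x)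
      + (B r₂ s • F B r₁ (k + n) x - B r₁ s • F B r₂ (k + n) x) := by
  have key : ∀ i : ℤ, N B r₁ i r₂ (k - 1 - i) (F B s n x) =
      F B s n (N B r₁ i r₂ (k - 1 - i) x) +
      ((if i = k + n then B r₂ s • F B r₁ (k + n) x else 0) -
        (if i = -1 - n then B r₁ s • F B r₂ (k + n) x else 0)) := by
    intro i
    have e1 : (if i = k + n then B r₂ s • F B r₁ (k + n) x else 0) =
        (if k - 1 - i + n = -1 then B r₂ s else 0) • F B r₁ i x := by
      by_cases h : i = k + n
      · rw [if_pos h, if_pos (by omega), h]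
      · rw [if_neg h, if_neg (by omega), zero_smul]
    have e2 : (if i = -1 - n then B r₁ s • F B r₂ (k + n) x else 0) =
        (if i + n = -1 then B r₁ s else 0) • F B r₂ (k - 1 - i) x := by
      by_cases h : i = -1 - n
      · rw [if_pos h, if_pos (by omega), h]; congr 3; ring
      · rw [if_neg h, if_neg (by omega), zero_smul]
    rw [e1, e2]
    unfold N
    by_cases hi : i < 0
    · rw [if_pos hi]
      simp only [LinearMap.comp_apply]
      rw [F_anti B hB r₂ s, map_sub, map_smul, F_anti B hB r₁ s]
      abel
    · rw [if_neg hi]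
      simp only [LinearMap.neg_apply, LinearMap.comp_apply, map_neg]
      rw [F_anti B hB r₁ s, map_sub, map_smul, F_anti B hB r₂ s]
      abel
  have f1 : (Function.support fun i : ℤ =>
      (if i = k + n then B r₂ s • F B r₁ (k + n) x else 0)).Finite :=
    (Set.finite_singleton (k + n)).subset fun i hi => by
      by_contra h; exact hi (if_neg h)
  have f2 : (Function.support fun i : ℤ =>
      (if i = -1 - n then B r₁ s • F B r₂ (k + n) x else 0)).Finite :=
    (Set.finite_singleton (-1 - n)).subset fun i hi => by
      by_contra h; exact hi (if_neg h)
  have f0 := N_finite B r₁ r₂ (k - 1) x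
  rw [T_apply, T_apply, finsum_congr key, map_finsum _ f0,
    finsum_add_distrib _ _, finsum_sub_distrib f1 f2]
  · congr 2
    · rw [finsum_eq_single _ (k + n) (fun i hi => if_neg hi), if_pos rfl]
    · rw [finsum_eq_single _ (-1 - n) (fun i hi => if_neg hi), if_pos rfl]
  · refine f0.subset fun i hi h => hi ?_
    simp only [] at h
    simp only [h, map_zero]
  · refine (f1.union f2).subset fun i hi => ?_
    exact Function.support_sub _ _ hi

lemma T_swap (hB : ∀ u v, B u v = B v u) (u v : C) (p : ℤ) (x : FockV C) :
    T B u v p x = - T B v u p x := by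
  rw [T_apply, T_apply, ← finsum_neg_distrib]
  rw [← finsum_comp_equiv (Equiv.subLeft (p - 1))]
  refine finsum_congr fun i => ?_
  simp only [Equiv.subLeft_apply, sub_sub_cancel]
  have h := F_anti B hB u v (p - 1 - i) i x
  unfold N
  by_cases h1 : p - 1 - i < 0 <;> by_cases h2 : i < 0
  · rw [if_pos h1, if_pos h2]
    rw [if_neg (by omega)] at h
    simpa using h
  · rw [if_pos h1, if_neg h2]; simp
  · rw [if_neg h1, if_pos h2]; simp
  · rw [if_neg h1, if_neg h2]
    rw [if_neg (by omega)] at h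
    simp only [LinearMap.neg_apply, LinearMap.comp_apply, h]; simp

/-- step difference -/
def st (k i : ℤ) : ℂ := (if i < 0 then 1 else 0) - (if k + i < 0 then 1 else 0)

lemma st_finite (k : ℤ) : (Function.support (st k)).Finite := by
  refine (Set.finite_Icc (-|k|) |k|).subset fun i hi => ?_
  by_contra h
  apply hi
  have h1 := le_abs_self k
  have h2 := neg_abs_le k
  rw [Set.mem_Icc, not_and_or] at h
  unfold st
  by_cases h3 : i < 0
  · rw [if_pos h3, if_pos (by omega), sub_self]
  · rw [if_neg h3, if_neg (by omega), sub_self]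

lemma st_sum (k : ℤ) : ∑ᶠ i, st k i = k := by
  rcases le_total 0 k with hk | hk
  · rw [finsum_eq_sum_of_support_subset (s := Finset.Ico (-k) 0)]
    · rw [Finset.sum_congr rfl (g := fun _ => (1 : ℂ))]
      · simp only [Finset.sum_const, Int.card_Ico, nsmul_eq_mul, mul_one]
        have : ((0 - -k).toNat : ℤ) = k := by omega
        exact_mod_cast this
      · intro i hi
        rw [Finset.mem_Ico] at hi
        unfold st
        rw [if_pos (by omega), if_neg (by omega), sub_zero]
    · intro i hi
      by_contra h
      apply hi
      rw [Finset.mem_coe, Finset.mem_Ico] at h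
      unfold st
      by_cases h3 : i < 0
      · rw [if_pos h3, if_pos (by omega), sub_self]
      · rw [if_neg h3, if_neg (by omega), sub_self]
  · rw [finsum_eq_sum_of_support_subset (s := Finset.Ico 0 (-k))]
    · rw [Finset.sum_congr rfl (g := fun _ => (-1 : ℂ))]
      · simp only [Finset.sum_const, Int.card_Ico, nsmul_eq_mul, mul_neg, mul_one]
        have : -((-k - 0).toNat : ℤ) = k := by omega
        exact_mod_cast this
      · intro i hi
        rw [Finset.mem_Ico] at hi
        unfold st
        rw [if_neg (by omega), if_pos (by omega), zero_sub]
    · intro i hi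
      by_contra h
      apply hi
      rw [Finset.mem_coe, Finset.mem_Ico] at h
      unfold st
      by_cases h3 : i < 0
      · rw [if_pos h3, if_pos (by omega), sub_self]
      · rw [if_neg h3, if_neg (by omega), sub_self]

/-- product ordered by the sign of `i` -/
def P (u : C) (v : C) (k m i : ℤ) : FockV C →ₗ[ℂ] FockV C :=
  if i < 0 then (F B u (k + i)).comp (F B v (m - 1 - i))
  else -((F B v (m - 1 - i)).comp (F B u (k + i)))

lemma P_eq (hB : ∀ u v, B u v = B v u) (u v : C) (k m i : ℤ) (x : FockV C) :
    P B u v k m i x = N B u (k + i) v (k + m - 1 - (k + i)) x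
      + st k i • (if k + m = 0 then B u v else 0) • x := by
  have e : k + m - 1 - (k + i) = m - 1 - i := by ring
  have h := F_anti B hB u v (k + i) (m - 1 - i) x
  have e2 : k + i + (m - 1 - i) = -1 ↔ k + m = 0 := by omega
  simp only [e2] at h
  rw [e]
  unfold P N st
  by_cases h1 : i < 0 <;> by_cases h2 : k + i < 0 <;>
    simp only [h1, h2, if_true, if_false, LinearMap.neg_apply, LinearMap.comp_apply, h, sub_self,
      zero_smul, add_zero, sub_zero, zero_sub, one_smul, neg_smul] <;> abel

lemma N_shift_finite (u v : C) (k m : ℤ) (x : FockV C) :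
    (Function.support fun i : ℤ => N B u (k + i) v (k + m - 1 - (k + i)) x).Finite :=
  (N_finite B u v (k + m - 1) x).preimage (f := fun i => k + i)
    (fun a _ b _ h => by simpa using h)

lemma st_smul_finite (k : ℤ) (y : FockV C) :
    (Function.support fun i : ℤ => st k i • y).Finite :=
  (st_finite k).subset fun i hi h => hi (by simp only [h, zero_smul])

lemma P_finite (hB : ∀ u v, B u v = B v u) (u v : C) (k m : ℤ) (x : FockV C) :
    (Function.support fun i : ℤ => P B u v k m i x).Finite := by
  simp only [P_eq B hB]
  exact ((N_shift_finite B u v k m x).union (st_smul_finite k _)).subset (Function.support_add _ _)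

lemma P_sum (hB : ∀ u v, B u v = B v u) (u v : C) (k m : ℤ) (x : FockV C) :
    ∑ᶠ i : ℤ, P B u v k m i x = T B u v (k + m) x
      + (k : ℂ) • (if k + m = 0 then B u v else 0) • x := by
  simp only [P_eq B hB]
  rw [finsum_add_distrib (N_shift_finite B u v k m x) (st_smul_finite k _),
    ← finsum_smul' (st_finite k), st_sum, T_apply]
  congr 1
  exact finsum_comp_equiv (Equiv.addLeft k) (f := fun i => N B u i v (k + m - 1 - i) x)

lemma smul_fin {f : ℤ → FockV C} (h : (Function.support f).Finite) (c : ℂ) :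
    (Function.support fun i => c • f i).Finite :=
  h.subset fun i hi h => hi (by simp only [h, smul_zero])

lemma add_fin {f g : ℤ → FockV C} (h : (Function.support f).Finite)
    (h' : (Function.support g).Finite) : (Function.support fun i => f i + g i).Finite :=
  (h.union h').subset (Function.support_add _ _)

lemma sub_fin {f g : ℤ → FockV C} (h : (Function.support f).Finite)
    (h' : (Function.support g).Finite) : (Function.support fun i => f i - g i).Finite :=
  (h.union h').subset (Function.support_sub _ _)

lemma map_fin {f : ℤ → FockV C} (h : (Function.support f).Finite) (L : FockV C →ₗ[ℂ] FockV C) :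
    (Function.support fun i => L (f i)).Finite :=
  h.subset fun i hi h => hi (by simp only [h, map_zero])

lemma main (hB : ∀ u v, B u v = B v u) (r₁ r₂ s₁ s₂ : C) (k m : ℤ) (x : FockV C) :
    T B r₁ r₂ k (T B s₁ s₂ m x) - T B s₁ s₂ m (T B r₁ r₂ k x) =
      B r₂ s₁ • (T B r₁ s₂ (k + m) x + (k : ℂ) • (if k + m = 0 then B r₁ s₂ else 0) • x)
      - B r₁ s₁ • (T B r₂ s₂ (k + m) x + (k : ℂ) • (if k + m = 0 then B r₂ s₂ else 0) • x)
      + (B r₂ s₂ • T B s₁ r₁ (k + m) x - B r₁ s₂ • T B s₁ r₂ (k + m) x) := by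
  have key : ∀ i : ℤ, T B r₁ r₂ k (N B s₁ i s₂ (m - 1 - i) x)
      - N B s₁ i s₂ (m - 1 - i) (T B r₁ r₂ k x) =
      B r₂ s₁ • P B r₁ s₂ k m i x - B r₁ s₁ • P B r₂ s₂ k m i x
      + (B r₂ s₂ • N B s₁ i r₁ (k + m - 1 - i) x - B r₁ s₂ • N B s₁ i r₂ (k + m - 1 - i) x) := by
    intro i
    have e : k + m - 1 - i = k + (m - 1 - i) := by ring
    rw [e]
    unfold N P
    split_ifs with hi
    all_goals
      simp only [LinearMap.neg_apply, LinearMap.comp_apply, map_neg, T_field B hB, map_add, map_sub,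
        map_smul, smul_neg]
      abel
  have f0 := N_finite B s₁ s₂ (m - 1) x
  have f0' := N_finite B s₁ s₂ (m - 1) (T B r₁ r₂ k x)
  have g1 := smul_fin (P_finite B hB r₁ s₂ k m x) (B r₂ s₁)
  have g2 := smul_fin (P_finite B hB r₂ s₂ k m x) (B r₁ s₁)
  have g3 := smul_fin (N_finite B s₁ r₁ (k + m - 1) x) (B r₂ s₂)
  have g4 := smul_fin (N_finite B s₁ r₂ (k + m - 1) x) (B r₁ s₂)
  rw [T_apply B s₁ s₂ m x, T_apply B s₁ s₂ m, map_finsum _ f0,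
    ← finsum_sub_distrib (map_fin f0 _) f0', finsum_congr key,
    finsum_add_distrib (sub_fin g1 g2) (sub_fin g3 g4), finsum_sub_distrib g1 g2,
    finsum_sub_distrib g3 g4, ← smul_finsum, ← smul_finsum, ← smul_finsum, ← smul_finsum,
    P_sum B hB, P_sum B hB, ← T_apply, ← T_apply]

lemma BC_symm (u v : CC) : BC u v = BC v u := by
  simp only [BC, LinearMap.mk₂_apply]; ring

lemma T_ee (p : ℤ) (x : FockV CC) : T BC ve ve p x = 0 := by
  have h := T_swap BC BC_symm ve ve p x
  have h2 : (2 : ℂ) • T BC ve ve p x = 0 := by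
    rw [two_smul]; nth_rewrite 1 [h]; simp
  exact (smul_eq_zero.mp h2).resolve_left two_ne_zero

end GhostAux
end

/-- Fermionic realization of the short node of type `B_n` via a ghost field:
the operators `X₊(p) = √2 T_{a,e}(p)`, `X₋(p) = √2 T_{e,a*}(p)`,
`h(p) = T_{a,a*}(p)` satisfy, for all `k, m ∈ ℤ`,
(i) `[X₊(k), X₋(m)] = −2(h(k+m) + k δ_{k+m,0} · id_V)`;
(ii) `[h(k), X₊(m)] = X₊(k+m)` and `[h(k), X₋(m)] = −X₋(k+m)`;
(iii) `[h(k), h(m)] = k δ_{k+m,0} · id_V`;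
i.e. the MRY relations (R1)–(R3) for the short simple root `α_n` of the
toroidal Lie algebra of type `B_n` (with `(α_n|α_n) = 1`), with the central
element `¢` acting as the identity (level one). -/
theorem short_node_ghost_realization (k m : ℤ) (x : FockV CC) :
    (Xplus k (Xminus m x) - Xminus m (Xplus k x)
        = -((2 : ℂ) • (hOp (k + m) x + (if k + m = 0 then (k : ℂ) else 0) • x))) ∧
    (hOp k (Xplus m x) - Xplus m (hOp k x) = Xplus (k + m) x) ∧
    (hOp k (Xminus m x) - Xminus m (hOp k x) = -(Xminus (k + m) x)) ∧
    (hOp k (hOp m x) - hOp m (hOp k x) = (if k + m = 0 then (k : ℂ) else 0) • x) := by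
  have hs : ((Real.sqrt 2 : ℝ) : ℂ) * ((Real.sqrt 2 : ℝ) : ℂ) = 2 := by
    rw [← Complex.ofReal_mul, Real.mul_self_sqrt (by norm_num)]; norm_num
  have b1 : BC va vastar = 1 := by simp [BC, va, vastar]
  have b2 : BC vastar va = 1 := by simp [BC, va, vastar]
  have b3 : BC ve ve = -1 := by simp [BC, ve]
  have b4 : BC va ve = 0 := by simp [BC, va, ve]
  have b5 : BC ve va = 0 := by simp [BC, va, ve]
  have b6 : BC vastar ve = 0 := by simp [BC, vastar, ve]
  have b7 : BC ve vastar = 0 := by simp [BC, vastar, ve]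
  have b8 : BC va va = 0 := by simp [BC, va]
  have b9 : BC vastar vastar = 0 := by simp [BC, vastar]
  have c : (k : ℂ) • (if k + m = 0 then (1 : ℂ) else 0) • x
      = (if k + m = 0 then (k : ℂ) else 0) • x := by
    split_ifs <;> simp
  unfold Xplus Xminus hOp
  simp only [GhostAux.Tq_eq, map_smul]
  refine ⟨?_, ?_, ?_, ?_⟩
  · have h := GhostAux.main BC GhostAux.BC_symm va ve ve vastar k m x
    simp only [b1, b3, b4, b7, GhostAux.T_ee, c] at h
    rw [smul_comm, smul_smul, smul_smul, hs, ← smul_sub, h]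
    simp only [neg_smul, one_smul, zero_smul, smul_zero, sub_zero, add_zero, smul_neg]
  · have h := GhostAux.main BC GhostAux.BC_symm va vastar va ve k m x
    simp only [b2, b4, b6, b8] at h
    rw [← smul_sub, h]
    simp
  · have h := GhostAux.main BC GhostAux.BC_symm va vastar ve vastar k m x
    simp only [b1, b4, b6, b9] at h
    rw [← smul_sub, h]
    simp
  · have h := GhostAux.main BC GhostAux.BC_symm va vastar va vastar k m x
    simp only [b1, b2, b8, b9, c] at h
    rw [h]
    simp
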